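/- Let n ≥ 3 be an integer and J_n = {0,…,n−2} ∪ {n+1,…,2n−1}. Let (m_k)_{k∈J_n} be positive integers such that at most n−1 of them equal 1, none of them equals 2, and at least one of them is greater than 2. Then there exist nonzero complex numbers z_k (k ∈ J_n), each a periodic point of minimal period m_k of the map f_0(w) = w^n, such that the (2n−2)×(2n−2) matrix with rows and columns indexed by J_n and with (k,i)-entry z_k^{−n^{m_k−1}}·P_{n,i,m_k}(z_k) is invertible. -/

import Mathlib

/-- The set of periodic points `z ∈ ℂ` of minimal period `m` of the map `f₀(w) = wⁿ`:
`f₀^∘m(z) = z` and `f₀^∘r(z) ≠ z` for all `1 ≤ r < m`. -/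
def perSet (n m : ℕ) : Set ℂ :=
  {z : ℂ | (fun w : ℂ => w ^ n)^[m] z = z ∧
    ∀ r, 1 ≤ r → r < m → (fun w : ℂ => w ^ n)^[r] z ≠ z}

/-- The polynomial `P_{n,j,m} ∈ ℂ[z]` from Proposition 4.3:
`P_{n,j,m}(z) = (j n^{m-1} - n^m)(z^{(j+1)n^{m-1}-1} + ∑_{i=0}^{m-2} z^{n^i(j-n)+n^{m-1}})`
for `0 ≤ j ≤ n-2` (where `n^i(j-n) + n^{m-1} = n^{m-1} - n^i (n-j)` is a nonnegative
integer), `P_{n,j,m}(z) = (j n^{m-1} - n^m) ∑_{i=0}^{m-1} z^{n^i(j-n)+n^{m-1}}` for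
`n+1 ≤ j ≤ 2n-2`, and
`P_{n,j,m}(z) = (j n^{m-1} - n^m)(z + ∑_{i=0}^{m-2} z^{n^i(n-1)+n^{m-1}})` for `j = 2n-1`. -/
noncomputable def P (n j m : ℕ) : Polynomial ℂ :=
  Polynomial.C ((j : ℂ) * (n : ℂ) ^ (m - 1) - (n : ℂ) ^ m) *
    (if j ≤ n - 2 then
      Polynomial.X ^ ((j + 1) * n ^ (m - 1) - 1) +
        ∑ i ∈ Finset.range (m - 1), Polynomial.X ^ (n ^ (m - 1) - n ^ i * (n - j))
    else if j ≤ 2 * n - 2 then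
      ∑ i ∈ Finset.range m, Polynomial.X ^ (n ^ i * (j - n) + n ^ (m - 1))
    else
      Polynomial.X +
        ∑ i ∈ Finset.range (m - 1), Polynomial.X ^ (n ^ i * (n - 1) + n ^ (m - 1)))

/-- The index set `J_n = {0,…,n-2} ∪ {n+1,…,2n-1}`. -/
def Jset (n : ℕ) : Finset ℕ :=
  (Finset.range (2 * n)).filter (fun k => k ≠ n - 1 ∧ k ≠ n)


def eExp (n m : ℕ) (d : ℤ) (i : ℕ) : ℤ :=
  if i + 1 < m then d * (n:ℤ) ^ i
  else if 2 ≤ d then d * (n:ℤ) ^ (m-1) - ((n:ℤ) ^ m - 1)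
  else if d = -((n:ℤ) - 1) then d * (n:ℤ) ^ (m-1) + ((n:ℤ) ^ m - 1)
  else d * (n:ℤ) ^ (m-1)

lemma eExp_bounds (n m : ℕ) (hn : 3 ≤ n) (hm : 3 ≤ m) (d : ℤ) (hd : |d| ≤ (n:ℤ) - 1) (i : ℕ)
    (hi : i < m) :
    -(((n:ℤ) - 2) * (n:ℤ) ^ (m-1)) ≤ eExp n m d i ∧ eExp n m d i ≤ (n:ℤ) ^ (m-1) := by
  obtain ⟨k, rfl⟩ : ∃ k, m = k + 1 := ⟨m - 1, by omega⟩
  have hn' : (3:ℤ) ≤ n := by exact_mod_cast hn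
  obtain ⟨h1, h2⟩ := abs_le.mp hd
  have hA : (1:ℤ) ≤ (n:ℤ) ^ k := one_le_pow₀ (by omega)
  simp only [Nat.add_sub_cancel, eExp, pow_succ]
  split_ifs with c1 c2 c3
  · have hp : (n:ℤ) ^ (i+1) ≤ (n:ℤ) ^ k := pow_le_pow_right₀ (by omega) (by omega)
    have hp0 : (0:ℤ) < (n:ℤ) ^ i := by positivity
    rw [pow_succ] at hp
    constructor <;> nlinarith
  · constructor <;> nlinarith
  · subst c3
    constructor <;> nlinarith
  · have : -((n:ℤ)-2) ≤ d := by omega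
    constructor <;> nlinarith

lemma eExp_zero (n m : ℕ) (hm : 3 ≤ m) (d : ℤ) : eExp n m d 0 = d := by
  simp [eExp, show 1 < m by omega]

lemma eExp_eq (n m : ℕ) (hn : 3 ≤ n) (hm : 3 ≤ m) (d d' : ℤ) (hd : |d| ≤ (n:ℤ) - 1)
    (hd0 : d ≠ 0) (hd' : |d'| ≤ (n:ℤ) - 1) (hd0' : d' ≠ 0) (i : ℕ)
    (hi : i < m) (h : eExp n m d' i = d) : i = 0 ∧ d' = d := by
  have hn' : (3:ℤ) ≤ n := by exact_mod_cast hn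
  obtain ⟨h1, h2⟩ := abs_le.mp hd
  obtain ⟨h1', h2'⟩ := abs_le.mp hd'
  by_cases c1 : i + 1 < m
  · rw [eExp, if_pos c1] at h
    rcases Nat.eq_zero_or_pos i with rfl | hi0
    · simpa using h
    · exfalso
      have : (n:ℤ) ∣ d := by
        rw [← h]; exact Dvd.dvd.mul_left (dvd_pow_self _ (by omega)) _
      have := Int.le_of_dvd (abs_pos.mpr hd0) ((dvd_abs _ _).mpr this)
      omega
  · exfalso
    obtain ⟨k, rfl⟩ : ∃ k, m = k + 1 := ⟨m - 1, by omega⟩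
    have hA : (n:ℤ) ^ 2 ≤ (n:ℤ) ^ k := pow_le_pow_right₀ (by omega) (by omega)
    have hA2 : 3 * (n:ℤ) ≤ (n:ℤ) ^ k := by nlinarith
    rw [eExp, if_neg c1] at h
    simp only [Nat.add_sub_cancel, pow_succ] at h
    split_ifs at h with c2 c3
    · nlinarith
    · subst c3; nlinarith
    · rcases lt_or_gt_of_ne hd0' with h0 | h0
      · nlinarith
      · nlinarith

lemma eExp_zpow (n m : ℕ) (d : ℤ) (i : ℕ) (hi : i < m) (z : ℂ) (hz : z ≠ 0)
    (hzm : z ^ ((n:ℤ)^m - 1) = 1) : z ^ eExp n m d i = z ^ (d * (n:ℤ) ^ i) := by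
  have key : ¬ (i + 1 < m) → i = m - 1 := by omega
  rw [eExp]
  split_ifs with c1 c2 c3
  · rfl
  · rw [zpow_sub₀ hz, hzm, div_one, key c1]
  · rw [zpow_add₀ hz, hzm, mul_one, key c1]
  · rw [key c1]

lemma iter_eq (n r : ℕ) (z : ℂ) : (fun w : ℂ => w ^ n)^[r] z = z ^ (n ^ r) := by
  rw [pow_iterate]

lemma sum_bound (n k : ℕ) (hn : 3 ≤ n) : ∑ r ∈ Finset.Icc 1 k, (n ^ r - 1) + 2 ≤ n ^ (k+1) := by
  induction k with
  | zero => simp; omega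
  | succ k ih =>
    rw [Finset.sum_Icc_succ_top (by omega)]
    have h : 3 * n ^ (k+1) ≤ n ^ (k+1+1) := by rw [pow_succ _ (k+1)]; nlinarith [Nat.zero_le (n^(k+1))]
    have := Nat.zero_le (n^(k+1))
    omega

lemma pow_sub_one_iff (N : ℕ) (hN : 1 ≤ N) (z : ℂ) (hz : z ≠ 0) : z ^ (N - 1) = 1 ↔ z ^ N = z := by
  obtain ⟨k, rfl⟩ : ∃ k, N = k + 1 := ⟨N - 1, by omega⟩
  rw [Nat.add_sub_cancel, pow_succ]
  constructor
  · intro h; rw [h, one_mul]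
  · intro h; exact mul_right_cancel₀ hz (by rw [h, one_mul])

lemma card_nthRoots' (N : ℕ) (hN : 0 < N) : (Polynomial.nthRootsFinset N (1:ℂ)).card = N :=
  (Complex.isPrimitiveRoot_exp N hN.ne').card_nthRootsFinset

lemma exists_points (n m : ℕ) (hn : 3 ≤ n) (hm : 3 ≤ m) :
    ∃ s : Finset ℂ, (∀ z ∈ s, z ≠ 0 ∧ z ∈ perSet n m) ∧ (n-1) * n ^ (m-1) < s.card := by
  classical
  have hp : ∀ r, 1 ≤ r → 1 < n ^ r := fun r hr => Nat.one_lt_pow (by omega) (by omega)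
  let S := Polynomial.nthRootsFinset (n^m-1) (1:ℂ)
  let B := (Finset.Icc 1 (m-2)).biUnion fun r => Polynomial.nthRootsFinset (n^r-1) (1:ℂ)
  refine ⟨S \ B, ?_, ?_⟩
  · intro z hz
    rw [Finset.mem_sdiff] at hz
    obtain ⟨hS, hB⟩ := hz
    have hm' := hp m (by omega)
    rw [Polynomial.mem_nthRootsFinset (by omega)] at hS
    have hz0 : z ≠ 0 := by
      rintro rfl
      rw [zero_pow (by omega)] at hS
      exact zero_ne_one hS
    rw [pow_sub_one_iff _ (by omega) _ hz0] at hS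
    have hB' : ∀ r, 1 ≤ r → r ≤ m - 2 → z ^ (n^r) ≠ z := by
      intro r h1 h2 h3
      apply hB
      have := hp r h1
      rw [Finset.mem_biUnion]
      refine ⟨r, Finset.mem_Icc.mpr ⟨h1, h2⟩, ?_⟩
      rw [Polynomial.mem_nthRootsFinset (by omega), pow_sub_one_iff _ (by omega) _ hz0]
      exact h3
    refine ⟨hz0, by rw [iter_eq]; exact hS, ?_⟩
    intro r h1 h2
    rw [iter_eq]
    by_cases h : r ≤ m - 2
    · exact hB' r h1 h
    · intro h3
      apply hB' 1 le_rfl (by omega)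
      have : m = r + 1 := by omega
      rw [this, pow_succ, pow_mul, h3] at hS
      simpa using hS
  · have h1 : B.card ≤ ∑ r ∈ Finset.Icc 1 (m-2), (n^r-1) := by
      refine Finset.card_biUnion_le.trans (Finset.sum_le_sum fun r hr => ?_)
      have := hp r (Finset.mem_Icc.mp hr).1
      rw [card_nthRoots' _ (by omega)]
    have h2 : S.card = n^m - 1 := card_nthRoots' _ (by have := hp m (by omega); omega)
    have h3 := sum_bound n (m-2) hn
    have h4 := Finset.le_card_sdiff B S
    have h5 : n ^ m = (n-1) * n^(m-1) + n^(m-1) := by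
      obtain ⟨k, rfl⟩ : ∃ k, m = k + 1 := ⟨m - 1, by omega⟩
      obtain ⟨l, rfl⟩ : ∃ l, n = l + 1 := ⟨n - 1, by omega⟩
      simp only [Nat.add_sub_cancel]; ring
    rw [show m - 2 + 1 = m - 1 by omega] at h3
    omega

lemma indep_period (n m : ℕ) (hn : 3 ≤ n) (hm : 3 ≤ m) {ι : Type*} [Fintype ι] (d : ι → ℤ)
    (hinj : Function.Injective d) (hd : ∀ j, |d j| ≤ (n:ℤ) - 1) (hd0 : ∀ j, d j ≠ 0)
    (c : ι → ℂ)
    (h : ∀ z ∈ perSet n m, z ≠ 0 → ∑ j, c j * ∑ i ∈ Finset.range m, z ^ (d j * (n:ℤ)^i) = 0) :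
    ∀ j, c j = 0 := by
  have hn' : (3:ℤ) ≤ n := by exact_mod_cast hn
  set K : ℤ := ((n:ℤ) - 2) * (n:ℤ) ^ (m-1) with hK
  let G : Polynomial ℂ := ∑ j, ∑ i ∈ Finset.range m,
    Polynomial.monomial (eExp n m (d j) i + K).toNat (c j)
  have hb := fun j i (hi : i < m) => eExp_bounds n m hn hm (d j) (hd j) i hi
  have hdeg : G.natDegree ≤ (n-1) * n ^ (m-1) := by
    refine Polynomial.natDegree_sum_le_of_forall_le _ _ fun j _ => ?_
    refine Polynomial.natDegree_sum_le_of_forall_le _ _ fun i hi => ?_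
    refine (Polynomial.natDegree_monomial_le _).trans ?_
    rw [Int.toNat_le]
    have := (hb j i (Finset.mem_range.mp hi)).2
    rw [Nat.cast_mul, Nat.cast_sub (by omega), Nat.cast_pow, hK]
    push_cast
    nlinarith
  obtain ⟨s, hs, hcard⟩ := exists_points n m hn hm
  have hG : G = 0 := by
    refine Polynomial.eq_zero_of_natDegree_lt_card_of_eval_eq_zero' G s ?_ (by omega)
    intro z hz
    obtain ⟨hz0, hzp⟩ := hs z hz
    have hzm : z ^ ((n:ℤ)^m - 1) = 1 := by
      have := hzp.1
      rw [iter_eq] at this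
      rw [zpow_sub₀ hz0, zpow_one]
      rw [div_eq_one_iff_eq hz0]
      exact_mod_cast this
    have e1 : G.eval z = z ^ K * ∑ j, c j * ∑ i ∈ Finset.range m, z ^ (d j * (n:ℤ)^i) := by
      simp only [G, Polynomial.eval_finsetSum, Polynomial.eval_monomial, Finset.mul_sum]
      refine Finset.sum_congr rfl fun j _ => Finset.sum_congr rfl fun i hi => ?_
      have hi' := Finset.mem_range.mp hi
      have hnn : 0 ≤ eExp n m (d j) i + K := by have := (hb j i hi').1; omega
      rw [← eExp_zpow n m (d j) i hi' z hz0 hzm, ← zpow_natCast, Int.toNat_of_nonneg hnn,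
        zpow_add₀ hz0]
      ring
    rw [e1, h z hzp hz0, mul_zero]
  intro j0
  have hc : G.coeff (d j0 + K).toNat = c j0 := by
    simp only [G, Polynomial.finsetSum_coeff, Polynomial.coeff_monomial]
    rw [Finset.sum_eq_single j0, Finset.sum_eq_single 0]
    · rw [eExp_zero n m hm, if_pos rfl]
    · intro i hi hi0
      rw [if_neg]
      intro he
      have hi' := Finset.mem_range.mp hi
      have b1 := (hb j0 i hi').1
      have b2 := (hb j0 0 (by omega)).1
      rw [eExp_zero n m hm] at b2
      exact hi0 (eExp_eq n m hn hm (d j0) (d j0) (hd _) (hd0 _) (hd _) (hd0 _) i hi' (by omega)).1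
    · intro h0; exact absurd (Finset.mem_range.mpr (by omega)) h0
    · intro j _ hj
      refine Finset.sum_eq_zero fun i hi => ?_
      rw [if_neg]
      intro he
      have hi' := Finset.mem_range.mp hi
      have b1 := (hb j i hi').1
      have b2 := (hb j0 0 (by omega)).1
      rw [eExp_zero n m hm] at b2
      exact hj (hinj (eExp_eq n m hn hm (d j0) (d j) (hd _) (hd0 _) (hd _) (hd0 _) i hi'
        (by omega)).2)
    · intro h0; exact absurd (Finset.mem_univ _) h0
  rw [← hc, hG, Polynomial.coeff_zero]

lemma entry_aux (n j m : ℕ) (hn : 3 ≤ n) (hm : 1 ≤ m) (hj : j ∈ Jset n) (z : ℂ) (hz : z ≠ 0)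
    (hzm : z ^ (n ^ m) = z) :
    z ^ (-((n : ℤ) ^ (m - 1))) * (P n j m).eval z =
      ((n:ℂ) ^ (m-1) * ((j:ℂ) - n)) * ∑ i ∈ Finset.range m, z ^ (((j:ℤ) - n) * (n:ℤ) ^ i) := by
  obtain ⟨k, rfl⟩ : ∃ k, m = k + 1 := ⟨m - 1, by omega⟩
  have hzm' : z ^ ((n:ℤ) ^ (k+1)) = z := by exact_mod_cast hzm
  simp only [Jset, Finset.mem_filter, Finset.mem_range] at hj
  simp only [P, Nat.add_sub_cancel, Polynomial.eval_mul, Polynomial.eval_C]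
  have hc : (j:ℂ) * (n:ℂ) ^ k - (n:ℂ)^(k+1) = (n:ℂ) ^ k * ((j:ℂ) - n) := by ring
  rw [hc, mul_left_comm]
  congr 1
  have hpos : ∀ i, 0 < n ^ i := fun i => pow_pos (by omega) i
  split_ifs with h1 h2
  · rw [Finset.sum_range_succ, add_comm, Polynomial.eval_add, mul_add, Polynomial.eval_finsetSum,
      Finset.mul_sum]
    congr 1
    · refine Finset.sum_congr rfl fun i hi => ?_
      have hi' := Finset.mem_range.mp hi
      have hle : n ^ i * (n - j) ≤ n ^ k := by
        calc n ^ i * (n - j) ≤ n ^ i * n := Nat.mul_le_mul_left _ (by omega)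
          _ = n ^ (i+1) := (pow_succ _ _).symm
          _ ≤ n ^ k := Nat.pow_le_pow_right (by omega) (by omega)
      rw [Polynomial.eval_pow, Polynomial.eval_X, ← zpow_natCast, ← zpow_add₀ hz,
        Nat.cast_sub hle, Nat.cast_mul, Nat.cast_sub (by omega), Nat.cast_pow, Nat.cast_pow]
      congr 1; ring
    · have hle : 1 ≤ (j+1) * n ^ k := Nat.mul_pos (by omega) (hpos k)
      have e : ((j:ℤ) - n) * (n:ℤ)^k = (j:ℤ) * (n:ℤ)^k - (n:ℤ)^(k+1) := by ring
      have e2 : -((n:ℤ)^k) + (((j:ℤ)+1) * (n:ℤ)^k - 1) = (j:ℤ) * (n:ℤ)^k - 1 := by ring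
      rw [Polynomial.eval_pow, Polynomial.eval_X, ← zpow_natCast, ← zpow_add₀ hz,
        Nat.cast_sub hle, e, zpow_sub₀ hz _ ((n:ℤ)^(k+1)), hzm']
      push_cast
      rw [e2, zpow_sub₀ hz, zpow_one]
  · rw [Polynomial.eval_finsetSum, Finset.mul_sum]
    refine Finset.sum_congr rfl fun i hi => ?_
    rw [Polynomial.eval_pow, Polynomial.eval_X, ← zpow_natCast, ← zpow_add₀ hz,
      Nat.cast_add, Nat.cast_mul, Nat.cast_sub (by omega), Nat.cast_pow, Nat.cast_pow]
    congr 1; ring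
  · have hj' : j = 2 * n - 1 := by omega
    have hj'' : (j:ℤ) - n = (n:ℤ) - 1 := by omega
    rw [Finset.sum_range_succ, add_comm, Polynomial.eval_add, mul_add, Polynomial.eval_finsetSum,
      Finset.mul_sum, hj'']
    congr 1
    · refine Finset.sum_congr rfl fun i hi => ?_
      rw [Polynomial.eval_pow, Polynomial.eval_X, ← zpow_natCast, ← zpow_add₀ hz,
        Nat.cast_add, Nat.cast_mul, Nat.cast_sub (by omega), Nat.cast_pow, Nat.cast_pow]
      congr 1; push_cast; ring
    · have e : ((n:ℤ) - 1) * (n:ℤ)^k = -((n:ℤ)^k) + (n:ℤ)^(k+1) := by ring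
      rw [Polynomial.eval_X, e, zpow_add₀ hz, hzm']

def dd (n j : ℕ) : ℤ := if j = 0 then -1 else (j:ℤ) - n

lemma entry_eq (n j m : ℕ) (hn : 3 ≤ n) (hm : 1 ≤ m) (hj : j ∈ Jset n) (z : ℂ) (hz : z ≠ 0)
    (hzm : z ^ (n ^ m) = z) :
    z ^ (-((n : ℤ) ^ (m - 1))) * (P n j m).eval z =
      ((n:ℂ) ^ (m-1) * ((j:ℂ) - n)) * ∑ i ∈ Finset.range m, z ^ (dd n j * (n:ℤ) ^ i) := by
  rw [entry_aux n j m hn hm hj z hz hzm, dd]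
  split_ifs with h
  · congr 1
    have h1 := Finset.sum_range_succ (fun i => z ^ ((-1) * (n:ℤ)^i)) m
    have h2 := Finset.sum_range_succ' (fun i => z ^ ((-1) * (n:ℤ)^i)) m
    have h3 : z ^ ((-1) * (n:ℤ)^m) = z ^ ((-1) * (n:ℤ)^0) := by
      have hzm' : z ^ ((n:ℤ) ^ m) = z := by exact_mod_cast hzm
      rw [neg_one_mul, zpow_neg, hzm']; simp
    rw [h2, h3] at h1
    rw [← add_right_cancel h1]
    refine Finset.sum_congr rfl fun i _ => ?_
    congr 1; subst h; push_cast; ring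
  · rfl

lemma greedy {ι α : Type*} [Fintype ι] [DecidableEq ι] (R : ι → α → (ι → ℂ))
    (ok : ι → α → Prop) (F : Finset ι) (z0 : ι → α) (h0 : ∀ k ∈ F, ok k (z0 k))
    (hli : LinearIndepOn ℂ (fun k => R k (z0 k)) (F : Set ι))
    (hspan : ∀ k, k ∉ F → Submodule.span ℂ {v | ∃ x, ok k x ∧ R k x = v} = ⊤) :
    ∃ z : ι → α, (∀ k, ok k (z k)) ∧ LinearIndependent ℂ (fun k => R k (z k)) := by
  have key : ∀ t : Finset ι, ∃ z : ι → α, (∀ k ∈ F ∪ t, ok k (z k)) ∧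
      LinearIndepOn ℂ (fun k => R k (z k)) ((F ∪ t : Finset ι) : Set ι) := by
    intro t
    induction t using Finset.induction_on with
    | empty => exact ⟨z0, by simpa using h0, by simpa using hli⟩
    | insert a t hat ih =>
      obtain ⟨z, hz1, hz2⟩ := ih
      by_cases ha : a ∈ F ∪ t
      · have : F ∪ insert a t = F ∪ t := by
          rw [Finset.union_insert, Finset.insert_eq_of_mem ha]
        rw [this]; exact ⟨z, hz1, hz2⟩
      · have haF : a ∉ F := fun h => ha (Finset.mem_union_left _ h)
        set W := Submodule.span ℂ ((fun k => R k (z k)) '' ((F ∪ t : Finset ι) : Set ι)) with hW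
        have hWtop : W ≠ ⊤ := by
          intro htop
          have h1 : Module.finrank ℂ W ≤ (F ∪ t).card := by
            have := finrank_span_finset_le_card (R := ℂ) ((F ∪ t).image (fun k => R k (z k)))
            rw [Finset.coe_image, Set.finrank, ← hW] at this
            exact this.trans Finset.card_image_le
          rw [htop, finrank_top, Module.finrank_fintype_fun_eq_card] at h1
          have h2 : (F ∪ t).card < Fintype.card ι :=
            Finset.card_lt_univ_of_notMem ha
          omega
        obtain ⟨x, hx1, hx2⟩ : ∃ x, ok a x ∧ R a x ∉ W := by
          by_contra! hcon
          apply hWtop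
          rw [eq_top_iff, ← hspan a haF, Submodule.span_le]
          rintro v ⟨x, hx, rfl⟩
          exact hcon x hx
        have hagree : ∀ k ∈ F ∪ t, Function.update z a x k = z k := by
          intro k hk
          rw [Function.update_of_ne]
          rintro rfl; exact ha hk
        have heq : Set.EqOn (fun k => R k (Function.update z a x k)) (fun k => R k (z k))
            ((F ∪ t : Finset ι) : Set ι) := by
          intro k hk
          simp only [hagree k (Finset.mem_coe.mp hk)]
        refine ⟨Function.update z a x, ?_, ?_⟩
        · intro k hk
          rw [Finset.union_insert, Finset.mem_insert] at hk
          rcases hk with rfl | hk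
          · simpa using hx1
          · rw [hagree k hk]; exact hz1 k hk
        · rw [Finset.union_insert, Finset.coe_insert, linearIndepOn_insert (by simpa using ha)]
          refine ⟨(linearIndepOn_congr heq).mpr hz2, ?_⟩
          rw [heq.image_eq, ← hW, Function.update_self]
          exact hx2
  obtain ⟨z, hz1, hz2⟩ := key Finset.univ
  refine ⟨z, fun k => hz1 k (by simp), ?_⟩
  simpa using hz2

lemma dd_props (n j : ℕ) (hn : 3 ≤ n) (hj : j ∈ Jset n) : |dd n j| ≤ (n:ℤ) - 1 ∧ dd n j ≠ 0 := by
  simp only [Jset, Finset.mem_filter, Finset.mem_range] at hj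
  rw [dd, abs_le]
  split_ifs <;> omega

lemma dd_inj (n j j' : ℕ) (hj : j ∈ Jset n) (hj' : j' ∈ Jset n)
    (h : dd n j = dd n j') : j = j' := by
  simp only [Jset, Finset.mem_filter, Finset.mem_range] at hj hj'
  rw [dd, dd] at h
  split_ifs at h <;> omega

lemma span_period (n m : ℕ) (hn : 3 ≤ n) (hm : 3 ≤ m) :
    Submodule.span ℂ {v : ↥(Jset n) → ℂ | ∃ z : ℂ, (z ≠ 0 ∧ z ∈ perSet n m) ∧
      (fun i : ↥(Jset n) =>
        z ^ (-((n : ℤ) ^ (m - 1))) * (P n (i : ℕ) m).eval z) = v} = ⊤ := by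
  classical
  by_contra hne
  obtain ⟨f, hf0, hf⟩ := Submodule.exists_le_ker_of_lt_top _ (lt_top_iff_ne_top.mpr hne)
  have hfv : ∀ v, f v = ∑ i, v i * f (Pi.single i 1) := by
    intro v
    conv_lhs => rw [pi_eq_sum_univ' v]
    simp [map_sum]
  have hsc : ∀ i : ↥(Jset n), (n:ℂ)^(m-1) * (((i:ℕ):ℂ) - n) ≠ 0 := by
    intro i
    have hi := i.2
    simp only [Jset, Finset.mem_filter, Finset.mem_range] at hi
    refine mul_ne_zero (pow_ne_zero _ (Nat.cast_ne_zero.mpr (by omega))) (sub_ne_zero.mpr ?_)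
    exact_mod_cast hi.2.2
  have := indep_period n m hn hm (fun i : ↥(Jset n) => dd n i)
    (fun i j h => Subtype.ext (dd_inj n i j i.2 j.2 h)) (fun i => (dd_props n i hn i.2).1)
    (fun i => (dd_props n i hn i.2).2)
    (fun i => ((n:ℂ)^(m-1) * (((i:ℕ):ℂ) - n)) * f (Pi.single i 1)) (by
      intro z hz hz0
      have h1 := hf (Submodule.subset_span ⟨z, ⟨hz0, hz⟩, rfl⟩)
      rw [LinearMap.mem_ker, hfv] at h1
      rw [← h1]
      refine Finset.sum_congr rfl fun i _ => ?_
      have hzm := hz.1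
      rw [iter_eq] at hzm
      rw [entry_eq n i m hn (by omega) i.2 z hz0 hzm]
      ring)
  apply hf0
  ext v
  have h2 : ∀ i, f (Pi.single i 1) = 0 := fun i => (mul_eq_zero.mp (this i)).resolve_left (hsc i)
  simp [h2]

lemma fixed_indep (n : ℕ) (hn : 3 ≤ n) (F : Finset ↥(Jset n)) (hF : F.card ≤ n - 1) :
    ∃ z : ↥(Jset n) → ℂ, (∀ k, z k ≠ 0 ∧ z k ∈ perSet n 1) ∧
      LinearIndepOn ℂ (fun k => (fun i : ↥(Jset n) =>
        z k ^ (-((n : ℤ) ^ (1 - 1))) * (P n (i : ℕ) 1).eval (z k))) (F : Set ↥(Jset n)) := by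
  classical
  have hζ := Complex.isPrimitiveRoot_exp (n-1) (by omega)
  set ζ := Complex.exp (2 * Real.pi * Complex.I / ((n-1 : ℕ):ℂ))
  have hζ0 : ζ ≠ 0 := hζ.ne_zero (by omega)
  let e := F.equivFin
  let z : ↥(Jset n) → ℂ := fun k => if h : k ∈ F then ζ ^ (e ⟨k, h⟩ : ℕ) else 1
  have hz1 : ∀ k, z k ≠ 0 ∧ z k ^ n = z k := by
    intro k
    have hz0 : z k ≠ 0 := by
      simp only [z]; split_ifs
      · exact pow_ne_zero _ hζ0
      · exact one_ne_zero
    refine ⟨hz0, ?_⟩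
    rw [← pow_sub_one_iff n (by omega) _ hz0]
    simp only [z]; split_ifs
    · rw [← pow_mul, mul_comm, pow_mul, hζ.pow_eq_one, one_pow]
    · exact one_pow _
  refine ⟨z, fun k => ⟨(hz1 k).1, ?_, ?_⟩, ?_⟩
  · rw [iter_eq, pow_one]; exact (hz1 k).2
  · intro r h1 h2; omega
  · rw [LinearIndepOn, Fintype.linearIndependent_iff]
    intro g hg
    have hv := Matrix.eq_zero_of_forall_pow_sum_mul_pow_eq_zero
      (f := fun a : Fin F.card => z (e.symm a))
      (v := fun a => g (e.symm a) * z (e.symm a)) (by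
        intro a b hab
        have hza : ∀ a, z (e.symm a) = ζ ^ (a:ℕ) := by
          intro a
          have hm : (e.symm a : ↥(Jset n)) ∈ F := (e.symm a).2
          simp only [z, dif_pos hm]
          simp
        simp only [hza] at hab
        exact Fin.ext (hζ.pow_inj (by omega) (by omega) hab)) (by
        intro t
        have ht : (t:ℕ) < n - 1 := lt_of_lt_of_le t.2 hF
        have hmem : n + 1 + (t:ℕ) ∈ Jset n := by
          simp only [Jset, Finset.mem_filter, Finset.mem_range]; omega
        have h1 := congrFun hg ⟨n + 1 + (t:ℕ), hmem⟩
        simp only [Finset.sum_apply, Pi.smul_apply, smul_eq_mul, Pi.zero_apply] at h1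
        have h2 : ∀ k : ↥(Jset n), z k ^ (-((n : ℤ) ^ (1 - 1))) *
            (P n (n + 1 + (t:ℕ)) 1).eval (z k) = ((t:ℂ) + 1) * (z k * z k ^ (t:ℕ)) := by
          intro k
          rw [entry_eq n _ 1 hn le_rfl hmem (z k) (hz1 k).1 (by rw [pow_one]; exact (hz1 k).2)]
          have : dd n (n + 1 + (t:ℕ)) = ((t + 1 : ℕ) : ℤ) := by
            rw [dd, if_neg (by omega)]; push_cast; ring
          rw [this]
          simp only [Finset.sum_range_one, pow_zero, mul_one, zpow_natCast, Nat.sub_self]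
          push_cast; ring
        simp only [h2] at h1
        have h3 : ((t:ℂ) + 1) * ∑ j, g (e.symm j) * z (e.symm j) * z (e.symm j) ^ (t:ℕ) = 0 := by
          rw [← h1, Finset.mul_sum]
          refine Fintype.sum_equiv e.symm _ _ fun j => ?_
          ring
        exact (mul_eq_zero.mp h3).resolve_left (Nat.cast_add_one_ne_zero _))
    intro i
    have := congrFun hv (e i)
    simp only [Pi.zero_apply, Equiv.symm_apply_apply] at this
    exact (mul_eq_zero.mp this).resolve_right (hz1 _).1

/-- Proposition 7.1 (case of at most `n-1` fixed points): for `n ≥ 3` and periods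
`(m_k)_{k ∈ J_n}` with at most `n-1` of them equal to `1`, none equal to `2`, and at
least one greater than `2`, there exist nonzero periodic points `z_k` of minimal
periods `m_k` making the `(2n-2)×(2n-2)` Jacobian matrix with `(k,i)`-entry
`z_k^{-n^{m_k-1}} P_{n,i,m_k}(z_k)` invertible. -/
theorem exists_independent_multipliers (n : ℕ) (hn : 3 ≤ n) (m : ℕ → ℕ)
    (hm1 : ∀ k ∈ Jset n, 1 ≤ m k)
    (hcard : ((Jset n).filter (fun k => m k = 1)).card ≤ n - 1)
    (hne2 : ∀ k ∈ Jset n, m k ≠ 2)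
    (hex : ∃ k ∈ Jset n, 2 < m k) :
    ∃ z : ℕ → ℂ,
      (∀ k ∈ Jset n, z k ≠ 0 ∧ z k ∈ perSet n (m k)) ∧
      (Matrix.of fun (k i : (Jset n : Finset ℕ)) =>
        z (k : ℕ) ^ (-((n : ℤ) ^ (m (k : ℕ) - 1))) *
          (P n (i : ℕ) (m (k : ℕ))).eval (z (k : ℕ))).det ≠ 0 := by
  classical
  let F : Finset (Jset n : Finset ℕ) := Finset.univ.filter fun k => m k = 1
  have hF : F.card ≤ n - 1 := by
    refine le_trans ?_ hcard
    rw [← Finset.card_map (Function.Embedding.subtype _)]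
    refine Finset.card_le_card ?_
    intro k hk
    obtain ⟨a, ha, rfl⟩ := Finset.mem_map.mp hk
    exact Finset.mem_filter.mpr ⟨a.2, (Finset.mem_filter.mp ha).2⟩
  obtain ⟨z0, hz0, hli⟩ := fixed_indep n hn F hF
  have hF1 : ∀ k ∈ F, m k = 1 := fun k hk => (Finset.mem_filter.mp hk).2
  obtain ⟨z, hz, hlin⟩ := greedy
    (fun (k : (Jset n : Finset ℕ)) (x : ℂ) => (fun i : (Jset n : Finset ℕ) =>
        x ^ (-((n : ℤ) ^ (m k - 1))) * (P n (i : ℕ) (m k)).eval x))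
    (fun k x => x ≠ 0 ∧ x ∈ perSet n (m k)) F z0
    (fun k hk => by rw [hF1 k hk]; exact hz0 k)
    ((linearIndepOn_congr (fun k hk => by
      simp only [hF1 k (Finset.mem_coe.mp hk)])).mpr hli)
    (fun k hk => by
      have h1 := hm1 k k.2
      have h2 := hne2 k k.2
      have h3 : m k ≠ 1 := fun h => hk (Finset.mem_filter.mpr ⟨Finset.mem_univ _, h⟩)
      exact span_period n (m k) hn (by omega))
  refine ⟨fun k => if h : k ∈ Jset n then z ⟨k, h⟩ else 0, ?_, ?_⟩
  · intro k hk
    simp only [dif_pos hk]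
    exact hz ⟨k, hk⟩
  · have hU : IsUnit (Matrix.of fun (k i : (Jset n : Finset ℕ)) =>
        z k ^ (-((n : ℤ) ^ (m (k : ℕ) - 1))) * (P n (i : ℕ) (m (k : ℕ))).eval (z k)) :=
      Matrix.linearIndependent_rows_iff_isUnit.mp hlin
    rw [Matrix.isUnit_iff_isUnit_det, isUnit_iff_ne_zero] at hU
    convert hU using 6 <;> simp
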